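/- arXiv:math/0606374 — 2 statements merged into one kernel-verified Lean document; each statement's English description precedes it below -/
import Mathlib

section
/- Let Q : F₂^m → F₂^n be a quadratic map with associated bilinear map B and associated quadratic polynomials q₁,…,q_n ∈ F₂[x₁,…,x_m]. Then Q is Bockstein closed (i.e., β(q_k) lies in the ideal (q₁,…,q_n) for every k) if and only if there exists an F₂-bilinear map P : F₂^n × F₂^m → F₂^n satisfying P(Q(x), y) = B(x,y) + P(B(x,y), x) for all x, y ∈ F₂^m. -/
open MvPolynomial

/-- The polarization (associated bilinear map) of a map `Q`:
`B(x,y) = Q(x+y) + Q(x) + Q(y)`. -/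
def qpolar {W V : Type*} [Add W] [Add V] (Q : W → V) (x y : W) : V :=
  Q (x + y) + Q x + Q y

/-- `Q` is a quadratic map between `F₂`-vector spaces: its polarization is `F₂`-bilinear. -/
def IsQuadraticMap {W V : Type*} [AddCommGroup W] [Module (ZMod 2) W]
    [AddCommGroup V] [Module (ZMod 2) V] (Q : W → V) : Prop :=
  (∀ x y z : W, qpolar Q (x + y) z = qpolar Q x z + qpolar Q y z) ∧
  (∀ x y z : W, qpolar Q x (y + z) = qpolar Q x y + qpolar Q x z)

/-- The Bockstein operator: the unique `F₂`-derivation of `F₂[x₁,…,x_m]`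
with `β(x_i) = x_i²`, given by `β(f) = Σ_i x_i² ∂f/∂x_i`. -/
noncomputable def bockstein {m : ℕ} (f : MvPolynomial (Fin m) (ZMod 2)) :
    MvPolynomial (Fin m) (ZMod 2) :=
  ∑ i : Fin m, X i ^ 2 * pderiv i f

/-- The quadratic polynomials associated to a quadratic map `Q : F₂^m → F₂^n`:
`q_k = Σ_i Q_k(e_i) x_i² + Σ_{i<j} B_k(e_i,e_j) x_i x_j`. -/
noncomputable def assocPoly {m n : ℕ} (Q : (Fin m → ZMod 2) → (Fin n → ZMod 2)) (k : Fin n) :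
    MvPolynomial (Fin m) (ZMod 2) :=
  (∑ i : Fin m, C (Q (Pi.single i 1) k) * X i ^ 2) +
  ∑ i : Fin m, ∑ j : Fin m,
    if i < j then C (qpolar Q (Pi.single i 1) (Pi.single j 1) k) * X i * X j else 0

/-!
Bockstein closedness amounts to identities `β(q_k) = ∑_l λ_{kl} q_l` in which, by homogeneity,
the `λ_{kl}` may be taken to be linear forms; such a family of linear forms is the same thing as a
bilinear map `P`. Both sides are cubic, and a homogeneous cubic `F` over `F₂` is zero as soon as its
partial derivatives vanish at every point of `F₂^m`: these are quadratic, so they are then zero as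
polynomials, and Euler's identity reads `F = 3F = ∑ X_i ∂_i F`. Finally `∂_i (β q_k)` and `∂_i q_k`
agree at every point of `F₂^m`, so comparing the derivatives at `x` in the direction `y` turns the
polynomial identities into `B(x, y) = P(Q(x), y) + P(B(x, y), x)`.
-/

section HomogeneousPolynomials

variable {σ R : Type*}

theorem pderiv_pderiv_comm [CommRing R] (i j : σ) (f : MvPolynomial σ R) :
    pderiv i (pderiv j f) = pderiv j (pderiv i f) := by
  classical
  have h : ⁅pderiv (R := R) i, pderiv j⁆ = 0 :=
    derivation_ext fun k => by
      rw [Derivation.commutator_apply]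
      simp [pderiv_X, Pi.single_apply, apply_ite]
  rw [← sub_eq_zero, ← Derivation.commutator_apply, h, Derivation.zero_apply]

theorem eq_zero_of_forall_eval_pderiv_eq_zero [CommRing R] [IsDomain R] [Finite σ]
    {f : MvPolynomial σ R} {d : ℕ} (hf : f.IsHomogeneous (d + 1)) (hd : ((d + 1 : ℕ) : R) ≠ 0)
    (hcard : (d : Cardinal) ≤ Cardinal.mk R) (h : ∀ x i, eval x (pderiv i f) = 0) : f = 0 := by
  have := Fintype.ofFinite σ
  have hpderiv (i : σ) : pderiv i f = 0 :=
    IsHomogeneous.eq_zero_of_forall_eval_eq_zero_of_le_card hf.pderiv (h · i) hcard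
  have euler : ((d + 1 : ℕ) : R) • f = 0 := by
    simp only [Nat.cast_smul_eq_nsmul, ← hf.sum_X_mul_pderiv, hpderiv, mul_zero,
      Finset.sum_const_zero]
  exact (smul_eq_zero.mp euler).resolve_left hd

theorem homogeneousComponent_mul_of_isHomogeneous_right [CommSemiring R] {q : MvPolynomial σ R}
    {d : ℕ} (hq : q.IsHomogeneous d) (e : ℕ) (c : MvPolynomial σ R) :
    homogeneousComponent (e + d) (c * q) = homogeneousComponent e c * q := by
  let _ := gradedAlgebra (σ := σ) (R := R)
  rw [← decomposition.decompose'_apply, ← decomposition.decompose'_apply]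
  exact DirectSum.coe_decompose_mul_add_of_right_mem (homogeneousSubmodule σ R) hq

theorem mem_span_range_iff_exists_isHomogeneous [CommSemiring R] {ι : Type*} [Fintype ι]
    {p : MvPolynomial σ R} {q : ι → MvPolynomial σ R} {d e : ℕ}
    (hp : p.IsHomogeneous (e + d)) (hq : ∀ l, (q l).IsHomogeneous d) :
    p ∈ Ideal.span (Set.range q) ↔
      ∃ c : ι → MvPolynomial σ R, (∀ l, (c l).IsHomogeneous e) ∧ p = ∑ l, c l * q l := by
  constructor
  · intro h
    obtain ⟨c, hc⟩ := Ideal.mem_span_range_iff_exists_fun.mp h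
    refine ⟨fun l => homogeneousComponent e (c l),
      fun l => homogeneousComponent_isHomogeneous e (c l), ?_⟩
    rw [← homogeneousComponent_eq_self hp, ← hc, map_sum]
    exact Finset.sum_congr rfl fun l _ =>
      homogeneousComponent_mul_of_isHomogeneous_right (hq l) e (c l)
  · rintro ⟨c, -, rfl⟩
    exact Ideal.mem_span_range_iff_exists_fun.mpr ⟨c, rfl⟩

end HomogeneousPolynomials

section LinearForms

variable {ι σ R : Type*} [Fintype σ] [CommSemiring R]

theorem exists_toMvPolynomial_eq {f : ι → MvPolynomial σ R} (hf : ∀ k, (f k).IsHomogeneous 1) :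
    ∃ M : Matrix ι σ R, M.toMvPolynomial = f := by
  have mem_span (k : ι) : f k ∈ Submodule.span R (Set.range (X : σ → MvPolynomial σ R)) :=
    homogeneousSubmodule_one_eq_span_X (σ := σ) (R := R) ▸ hf k
  choose M hM using fun k => (Submodule.mem_span_range_iff_exists_fun R).mp (mem_span k)
  refine ⟨Matrix.of M, funext fun k => ?_⟩
  simp only [← hM k, Matrix.toMvPolynomial, Matrix.of_apply, smul_eq_C_mul, C_mul_X_eq_monomial]

theorem pderiv_toMvPolynomial (M : Matrix ι σ R) (k : ι) (i : σ) :
    pderiv i (M.toMvPolynomial k) = C (M k i) := by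
  classical
  simp [Matrix.toMvPolynomial, ← C_mul_X_eq_monomial, pderiv_X, Pi.single_apply]

end LinearForms

section QuadraticPolynomials

variable {σ R : Type*} [Fintype σ] [DecidableEq σ] [CommSemiring R]

/-- The quadratic polynomial `T(X, X)` of a bilinear form `T`, i.e. its value at the generic
vector `X = (X_i)`. The form need not be symmetric, so every quadratic form arises this way in any
characteristic. -/
noncomputable def bilinPoly (T : LinearMap.BilinForm R (σ → R)) : MvPolynomial σ R :=
  ∑ i, ∑ j, C (T (Pi.single i 1) (Pi.single j 1)) * X i * X j

variable (T : LinearMap.BilinForm R (σ → R)) (x : σ → R)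

theorem isHomogeneous_bilinPoly : (bilinPoly T).IsHomogeneous 2 :=
  IsHomogeneous.sum _ _ _ fun i _ => IsHomogeneous.sum _ _ _ fun j _ =>
    (isHomogeneous_C_mul_X _ i).mul (isHomogeneous_X R j)

theorem sum_sum_apply_single (y : σ → R) :
    ∑ i, ∑ j, T (Pi.single i 1) (Pi.single j 1) * x i * y j = T x y := by
  rw [← LinearMap.sum_repr_mul_repr_mul (Pi.basisFun R σ) (Pi.basisFun R σ)]
  simp [Finsupp.sum_fintype, mul_left_comm, mul_comm]

theorem eval_bilinPoly : eval x (bilinPoly T) = T x x := by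
  simp only [bilinPoly, map_sum, map_mul, eval_C, eval_X, sum_sum_apply_single]

theorem eval_pderiv_bilinPoly (k : σ) :
    eval x (pderiv k (bilinPoly T)) = T x (Pi.single k 1) + T (Pi.single k 1) x := by
  have eval_pderiv_X (i : σ) : eval x (pderiv k (X i)) = (Pi.single k 1 : σ → R) i := by
    simp only [pderiv_X, Pi.single_apply, apply_ite (eval x), map_one, map_zero]
  have eval_pderiv_term (i j : σ) :
      eval x (pderiv k (C (T (Pi.single i 1) (Pi.single j 1)) * X i * X j)) =
        T (Pi.single i 1) (Pi.single j 1) * x i * (Pi.single k 1 : σ → R) j +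
          T (Pi.single i 1) (Pi.single j 1) * (Pi.single k 1 : σ → R) i * x j := by
    simp only [pderiv_mul, pderiv_C, map_add, map_mul, map_zero, eval_C, eval_X, eval_pderiv_X]
    ring
  simp only [bilinPoly, map_sum, eval_pderiv_term, Finset.sum_add_distrib, sum_sum_apply_single]

end QuadraticPolynomials

section Bockstein

variable {m d : ℕ} {f : MvPolynomial (Fin m) (ZMod 2)}

theorem isHomogeneous_bockstein (hf : f.IsHomogeneous (d + 1)) :
    (bockstein f).IsHomogeneous (d + 2) :=
  IsHomogeneous.sum _ _ _ fun i _ => by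
    simpa [add_comm] using (isHomogeneous_X_pow i 2).mul hf.pderiv

theorem eval_pderiv_bockstein (hf : f.IsHomogeneous (d + 1)) (x : Fin m → ZMod 2) (i : Fin m) :
    eval x (pderiv i (bockstein f)) = d * eval x (pderiv i f) := by
  have pderiv_sq (j : Fin m) : pderiv i (X j ^ 2 : MvPolynomial (Fin m) (ZMod 2)) = 0 := by
    rw [pow_two, pderiv_mul, mul_comm, CharTwo.add_self_eq_zero]
  calc eval x (pderiv i (bockstein f))
      = ∑ j, x j ^ 2 * eval x (pderiv j (pderiv i f)) := by
        simp [bockstein, pderiv_sq, pderiv_pderiv_comm i]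
    _ = eval x (∑ j, X j * pderiv j (pderiv i f)) := by
        simp [ZMod.pow_card]
    _ = d * eval x (pderiv i f) := by
        simp [hf.pderiv.sum_X_mul_pderiv]

end Bockstein

theorem qpolar_eq_polar {W V : Type*} [AddCommGroup W] [AddCommGroup V] [Module (ZMod 2) V]
    (Q : W → V) : qpolar Q = QuadraticMap.polar Q := by
  ext x y
  simp only [qpolar, QuadraticMap.polar, ZModModule.sub_eq_add]

namespace IsQuadraticMap

section Bundling

variable {W V : Type*} [AddCommGroup W] [Module (ZMod 2) W] [AddCommGroup V] [Module (ZMod 2) V]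
  {Q : W → V}

protected theorem map_zero (hQ : IsQuadraticMap Q) : Q 0 = 0 := by
  simpa [qpolar, ZModModule.add_self] using hQ.1 0 0 0

protected theorem map_smul (hQ : IsQuadraticMap Q) (a : ZMod 2) (x : W) :
    Q (a • x) = (a * a) • Q x := by
  obtain rfl | rfl : a = 0 ∨ a = 1 := by decide +revert
  · simp only [zero_smul, mul_zero, hQ.map_zero]
  · simp only [one_smul, mul_one]

/-- A quadratic map between `F₂`-vector spaces, bundled as a `QuadraticMap` so that the general
theory of polar forms applies to it. -/
def toQuadraticMap (hQ : IsQuadraticMap Q) : QuadraticMap (ZMod 2) W V :=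
  have polar_add_left (x x' y : W) := qpolar_eq_polar Q ▸ hQ.1 x x' y
  QuadraticMap.ofPolar Q hQ.map_smul polar_add_left fun a x y =>
    ZMod.map_smul (AddMonoidHom.mk' (QuadraticMap.polar Q · y) (polar_add_left · · y)) a x

theorem polarBilin_toQuadraticMap_apply (hQ : IsQuadraticMap Q) (x y : W) :
    hQ.toQuadraticMap.polarBilin x y = qpolar Q x y :=
  (congrFun₂ (qpolar_eq_polar Q) x y).symm

end Bundling

variable {m n : ℕ} {Q : (Fin m → ZMod 2) → (Fin n → ZMod 2)}

/-- The upper triangular bilinear form `T` with `T(x, x) = Q_k(x)`, whose matrix entries are the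
coefficients of the quadratic polynomial `q_k`. -/
noncomputable def triangularForm (hQ : IsQuadraticMap Q) (k : Fin n) :
    LinearMap.BilinForm (ZMod 2) (Fin m → ZMod 2) :=
  ((LinearMap.proj k).compQuadraticMap hQ.toQuadraticMap).toBilin (Pi.basisFun (ZMod 2) (Fin m))

variable (hQ : IsQuadraticMap Q) (k : Fin n)

include hQ

theorem triangularForm_single_single (i j : Fin m) :
    hQ.triangularForm k (Pi.single i 1) (Pi.single j 1) =
      if i = j then Q (Pi.single i 1) k
      else if i < j then qpolar Q (Pi.single i 1) (Pi.single j 1) k else 0 := by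
  rw [qpolar_eq_polar, ← Pi.basisFun_apply, ← Pi.basisFun_apply]
  exact QuadraticMap.toBilin_apply ((LinearMap.proj k).compQuadraticMap hQ.toQuadraticMap)
    (Pi.basisFun (ZMod 2) (Fin m)) i j

theorem toQuadraticMap_triangularForm :
    (hQ.triangularForm k).toQuadraticMap =
      (LinearMap.proj k).compQuadraticMap hQ.toQuadraticMap :=
  QuadraticMap.toQuadraticMap_toBilin _ _

theorem triangularForm_self (x : Fin m → ZMod 2) : hQ.triangularForm k x x = Q x k :=
  DFunLike.congr_fun (hQ.toQuadraticMap_triangularForm k) x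

theorem triangularForm_add_swap (x y : Fin m → ZMod 2) :
    hQ.triangularForm k x y + hQ.triangularForm k y x = qpolar Q x y k := by
  rw [← LinearMap.BilinMap.polar_toQuadraticMap, hQ.toQuadraticMap_triangularForm, qpolar_eq_polar]
  rfl

theorem assocPoly_eq_bilinPoly : assocPoly Q k = bilinPoly (hQ.triangularForm k) := by
  have split_diagonal (i j : Fin m) :
      C (hQ.triangularForm k (Pi.single i 1) (Pi.single j 1)) * X i * X j =
        (if i = j then C (Q (Pi.single i 1) k) * X i ^ 2 else 0) +
          if i < j then C (qpolar Q (Pi.single i 1) (Pi.single j 1) k) * X i * X j else 0 := by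
    rw [hQ.triangularForm_single_single]
    rcases eq_or_ne i j with rfl | hij
    · simp [pow_two, mul_assoc]
    · simp [hij, apply_ite C, ite_mul]
  simp only [bilinPoly, split_diagonal, Finset.sum_add_distrib, Finset.sum_ite_eq, Finset.mem_univ,
    if_true, assocPoly]

theorem isHomogeneous_assocPoly : (assocPoly Q k).IsHomogeneous 2 :=
  hQ.assocPoly_eq_bilinPoly k ▸ isHomogeneous_bilinPoly _

theorem eval_assocPoly (x : Fin m → ZMod 2) : eval x (assocPoly Q k) = Q x k := by
  rw [hQ.assocPoly_eq_bilinPoly, eval_bilinPoly, hQ.triangularForm_self]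

theorem eval_pderiv_assocPoly (x : Fin m → ZMod 2) (i : Fin m) :
    eval x (pderiv i (assocPoly Q k)) = qpolar Q x (Pi.single i 1) k := by
  rw [hQ.assocPoly_eq_bilinPoly, eval_pderiv_bilinPoly, hQ.triangularForm_add_swap]

theorem eval_pderiv_bockstein_assocPoly (x : Fin m → ZMod 2) (i : Fin m) :
    eval x (pderiv i (bockstein (assocPoly Q k))) = qpolar Q x (Pi.single i 1) k := by
  rw [eval_pderiv_bockstein (hQ.isHomogeneous_assocPoly k), Nat.cast_one, one_mul,
    hQ.eval_pderiv_assocPoly]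

end IsQuadraticMap

section LinearCombinations

theorem sum_apply_single_mul {ι κ M R : Type*} [Fintype ι] [DecidableEq ι] [CommSemiring R]
    [AddCommMonoid M] [Module R M] (P : (ι → R) →ₗ[R] M →ₗ[R] (κ → R)) (v : ι → R) (y : M) (k : κ) :
    ∑ l, P (Pi.single l 1) y k * v l = P v y k := by
  conv_rhs => rw [← (Pi.basisFun R ι).sum_repr v]
  simp [mul_comm]

variable {ι κ σ R : Type*} [Fintype ι] [DecidableEq ι] [Fintype σ] [DecidableEq σ]
  [CommSemiring R] (P : (ι → R) →ₗ[R] (σ → R) →ₗ[R] (κ → R))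

/-- The polynomial `∑_l P_k(e_l, X) q_l`, where `P_k` is the `k`-th coordinate of the bilinear map
`P` and `X = (X_i)` is the generic vector: a combination of the `q_l` whose coefficients are linear
forms, with all such combinations encoded by bilinear maps. -/
noncomputable def linearCombinationPoly (q : ι → MvPolynomial σ R) (k : κ) : MvPolynomial σ R :=
  ∑ l, (LinearMap.toMatrix' (P (Pi.single l 1))).toMvPolynomial k * q l

variable {q : ι → MvPolynomial σ R} {d : ℕ}

theorem isHomogeneous_linearCombinationPoly (hq : ∀ l, (q l).IsHomogeneous d) (k : κ) :
    (linearCombinationPoly P q k).IsHomogeneous (1 + d) :=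
  IsHomogeneous.sum _ _ _ fun l _ => (Matrix.toMvPolynomial_isHomogeneous _ k).mul (hq l)

theorem forall_mem_span_range_iff_exists_linearCombinationPoly {p : κ → MvPolynomial σ R}
    (hp : ∀ k, (p k).IsHomogeneous (1 + d)) (hq : ∀ l, (q l).IsHomogeneous d) :
    (∀ k, p k ∈ Ideal.span (Set.range q)) ↔
      ∃ P : (ι → R) →ₗ[R] (σ → R) →ₗ[R] (κ → R), ∀ k, p k = linearCombinationPoly P q k := by
  simp only [mem_span_range_iff_exists_isHomogeneous (hp _) hq]
  constructor
  · intro h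
    choose c hc hsum using h
    choose A hA using fun l => exists_toMvPolynomial_eq fun k => hc k l
    refine ⟨(Pi.basisFun R ι).constr R fun l => (A l).toLin', fun k => ?_⟩
    have constr_single (l : ι) :
        (Pi.basisFun R ι).constr R (fun l => (A l).toLin') (Pi.single l 1) = (A l).toLin' := by
      rw [← Pi.basisFun_apply, Module.Basis.constr_basis]
    simp only [hsum, linearCombinationPoly, constr_single, LinearMap.toMatrix'_toLin', hA]
  · rintro ⟨P, hP⟩ k
    exact ⟨_, fun l => Matrix.toMvPolynomial_isHomogeneous _ k, hP k⟩

theorem eval_pderiv_linearCombinationPoly (k : κ) (x : σ → R) (i : σ) :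
    eval x (pderiv i (linearCombinationPoly P q k)) =
      P (fun l => eval x (q l)) (Pi.single i 1) k +
        P (fun l => eval x (pderiv i (q l))) x k := by
  simp only [linearCombinationPoly, map_sum, pderiv_mul, pderiv_toMvPolynomial, map_add, map_mul,
    eval_C, Matrix.toMvPolynomial_eval_eq_apply, LinearMap.toMatrix'_mulVec,
    LinearMap.toMatrix'_apply, Finset.sum_add_distrib, sum_apply_single_mul]

end LinearCombinations

section BocksteinClosed

variable {m n : ℕ} {Q : (Fin m → ZMod 2) → (Fin n → ZMod 2)}
  (P : (Fin n → ZMod 2) →ₗ[ZMod 2] (Fin m → ZMod 2) →ₗ[ZMod 2] (Fin n → ZMod 2))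

theorem bockstein_eq_linearCombinationPoly_iff (hQ : IsQuadraticMap Q) (k : Fin n) :
    bockstein (assocPoly Q k) = linearCombinationPoly P (assocPoly Q) k ↔
      ∀ x i, qpolar Q x (Pi.single i 1) k =
        P (Q x) (Pi.single i 1) k + P (qpolar Q x (Pi.single i 1)) x k := by
  have homogeneous_sub := (isHomogeneous_bockstein (hQ.isHomogeneous_assocPoly k)).sub
    (isHomogeneous_linearCombinationPoly P hQ.isHomogeneous_assocPoly k)
  have eval_pderiv_combination (x : Fin m → ZMod 2) (i : Fin m) :
      eval x (pderiv i (linearCombinationPoly P (assocPoly Q) k)) =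
        P (Q x) (Pi.single i 1) k + P (qpolar Q x (Pi.single i 1)) x k := by
    simp only [eval_pderiv_linearCombinationPoly, hQ.eval_assocPoly, hQ.eval_pderiv_assocPoly]
  simp only [← eval_pderiv_combination, ← hQ.eval_pderiv_bockstein_assocPoly]
  refine ⟨fun h x i => by rw [h], fun h => sub_eq_zero.mp ?_⟩
  refine eq_zero_of_forall_eval_pderiv_eq_zero homogeneous_sub (by decide) (by simp) fun x i => ?_
  rw [map_sub, map_sub, h, sub_self]

theorem forall_apply_eq_iff_forall_apply_single_eq (hQ : IsQuadraticMap Q) (x : Fin m → ZMod 2) :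
    (∀ y, P (Q x) y = qpolar Q x y + P (qpolar Q x y) x) ↔
      ∀ i, P (Q x) (Pi.single i 1) =
        qpolar Q x (Pi.single i 1) + P (qpolar Q x (Pi.single i 1)) x := by
  refine ⟨fun h i => h _, fun h => ?_⟩
  let B := hQ.toQuadraticMap.polarBilin x
  have linear_eq : P (Q x) = B + P.flip x ∘ₗ B :=
    (Pi.basisFun (ZMod 2) (Fin m)).ext fun i => by
      simpa only [B, Pi.basisFun_apply, LinearMap.add_apply, LinearMap.comp_apply,
        LinearMap.flip_apply, hQ.polarBilin_toQuadraticMap_apply] using h i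
  intro y
  simpa only [B, LinearMap.add_apply, LinearMap.comp_apply, LinearMap.flip_apply,
    hQ.polarBilin_toQuadraticMap_apply] using LinearMap.congr_fun linear_eq y

theorem forall_bockstein_eq_linearCombinationPoly_iff (hQ : IsQuadraticMap Q) :
    (∀ k, bockstein (assocPoly Q k) = linearCombinationPoly P (assocPoly Q) k) ↔
      ∀ x y, P (Q x) y = qpolar Q x y + P (qpolar Q x y) x := by
  have move_term (a b c : ZMod 2) : a = b + c ↔ b = a + c := by
    rw [← sub_eq_iff_eq_add, CharTwo.sub_eq_add, eq_comm]
  calc (∀ k, bockstein (assocPoly Q k) = linearCombinationPoly P (assocPoly Q) k)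
      ↔ ∀ k x i, P (Q x) (Pi.single i 1) k =
          qpolar Q x (Pi.single i 1) k + P (qpolar Q x (Pi.single i 1)) x k := by
        simp only [bockstein_eq_linearCombinationPoly_iff P hQ, move_term (qpolar Q _ _ _)]
    _ ↔ ∀ x i, P (Q x) (Pi.single i 1) =
          qpolar Q x (Pi.single i 1) + P (qpolar Q x (Pi.single i 1)) x :=
        ⟨fun h x i => funext fun k => h k x i, fun h k x i => congrFun (h x i) k⟩
    _ ↔ ∀ x y, P (Q x) y = qpolar Q x y + P (qpolar Q x y) x :=
        forall_congr' fun x => (forall_apply_eq_iff_forall_apply_single_eq P hQ x).symm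

end BocksteinClosed

/-- A quadratic map `Q : F₂^m → F₂^n` is Bockstein closed iff there is an
`F₂`-bilinear map `P : F₂^n × F₂^m → F₂^n` with `P(Q(x),y) = B(x,y) + P(B(x,y),x)`. -/
theorem bockstein_closed_iff_exists_bilinear {m n : ℕ}
    (Q : (Fin m → ZMod 2) → (Fin n → ZMod 2)) (hQ : IsQuadraticMap Q) :
    (∀ k : Fin n, bockstein (assocPoly Q k) ∈ Ideal.span (Set.range (assocPoly Q))) ↔
    (∃ P : (Fin n → ZMod 2) →ₗ[ZMod 2] (Fin m → ZMod 2) →ₗ[ZMod 2] (Fin n → ZMod 2),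
      ∀ x y : Fin m → ZMod 2, P (Q x) y = qpolar Q x y + P (qpolar Q x y) x) :=
  (forall_mem_span_range_iff_exists_linearCombinationPoly
    (fun k => isHomogeneous_bockstein (hQ.isHomogeneous_assocPoly k))
    hQ.isHomogeneous_assocPoly).trans <|
  exists_congr fun P => forall_bockstein_eq_linearCombinationPoly_iff P hQ
end

section
/- Let L be an n×n matrix over the polynomial ring F₂[x₁,…,x_m] all of whose entries are homogeneous linear forms. Then there exists an invertible scalar matrix N ∈ GL_n(F₂) such that N⁻¹LN is diagonal if and only if β(L) + L² = 0, where β is applied entrywise. Equivalently, writing L = Σ_i L_i x_i with L_i ∈ M_n(F₂), such an N exists if and only if L_i² = L_i for all i and L_iL_j = L_jL_i for all i, j. -/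
open MvPolynomial

/-!
For `L = Σ_i x_i L_i` one has `β(L) = Σ_i x_i² L_i`. Evaluating `β(L) = L²` at the indicator vector
of a set `s` of variables shows that `Σ_{i ∈ s} L_i` is idempotent; singletons and pairs then say
that the `L_i` are idempotent and anticommute, which in characteristic two means that they commute.
Commuting idempotents over a field are semisimple with eigenvalues in `{0, 1}`, so they have a
common eigenbasis. Conversely, diagonal matrices commute, and over `F₂` they are idempotent.
-/

section SimultaneousDiagonalization

open Module

variable {ι K V : Type*} [Field K] [AddCommGroup V] [Module K V]

theorem isSemisimple_of_isIdempotentElem {f : End K V} (hf : IsIdempotentElem f) :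
    f.IsSemisimple := by
  have hsep : (Polynomial.X * (Polynomial.X - Polynomial.C 1) : Polynomial K).Separable :=
    Polynomial.separable_X.mul Polynomial.separable_X_sub_C ⟨1, -1, by simp⟩
  refine End.isSemisimple_of_squarefree_aeval_eq_zero hsep.squarefree ?_
  simp [mul_sub, hf.eq]

theorem iSup_eigenspace_eq_top_of_isIdempotentElem {R M : Type*} [CommRing R] [AddCommGroup M]
    [Module R M] {f : End R M} (hf : IsIdempotentElem f) :
    ⨆ μ, f.eigenspace μ = ⊤ := by
  refine eq_top_iff.mpr fun v _ ↦ ?_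
  have hfv : f (f v) = f v := congr($hf.eq v)
  have h_one : f v ∈ f.eigenspace 1 := by simp [hfv]
  have h_zero : v - f v ∈ f.eigenspace 0 := by simp [hfv]
  rw [← add_sub_cancel (f v) v]
  exact add_mem (Submodule.mem_iSup_of_mem 1 h_one) (Submodule.mem_iSup_of_mem 0 h_zero)

theorem iSup_iInf_eigenspace_eq_top_of_isIdempotentElem_of_commute [FiniteDimensional K V]
    {f : ι → End K V} (hf : ∀ i, IsIdempotentElem (f i)) (hcomm : ∀ i j, Commute (f i) (f j)) :
    ⨆ χ : ι → K, ⨅ i, (f i).eigenspace (χ i) = ⊤ := by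
  have hmax (i : ι) (μ : K) : (f i).maxGenEigenspace μ = (f i).eigenspace μ :=
    (isSemisimple_of_isIdempotentElem (hf i)).isFinitelySemisimple.maxGenEigenspace_eq_eigenspace μ
  simpa only [hmax] using
    End.iSup_iInf_maxGenEigenspace_eq_top_of_iSup_maxGenEigenspace_eq_top_of_commute f
      (fun i j _ ↦ hcomm i j)
      (fun i ↦ by simpa only [hmax] using iSup_eigenspace_eq_top_of_isIdempotentElem (hf i))

theorem exists_basis_forall_mem_iInf_eigenspace {n : Type*} (b₀ : Basis n K V) {f : ι → End K V}
    (hf : ⨆ χ : ι → K, ⨅ i, (f i).eigenspace (χ i) = ⊤) :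
    ∃ b : Basis n K V, ∀ k, ∃ χ : ι → K, b k ∈ ⨅ i, (f i).eigenspace (χ i) := by
  have hspan : ⊤ ≤ Submodule.span K (⋃ χ : ι → K, (↑(⨅ i, (f i).eigenspace (χ i)) : Set V)) := by
    rw [← Submodule.iSup_eq_span, hf]
  let b := Basis.ofSpan hspan
  refine ⟨b.reindex (b.indexEquiv b₀), fun k ↦ ?_⟩
  rw [Basis.reindex_apply]
  exact Set.mem_iUnion.mp (Basis.ofSpan_subset hspan (Set.mem_range_self _))

theorem isDiag_toMatrix_of_forall_mem_eigenspace {n R M : Type*} [Fintype n] [DecidableEq n]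
    [CommRing R] [AddCommGroup M] [Module R M] (b : Basis n R M) {f : End R M} {c : n → R}
    (hf : ∀ k, b k ∈ f.eigenspace (c k)) : (LinearMap.toMatrix b b f).IsDiag := by
  intro i j hij
  simp [LinearMap.toMatrix_apply, End.mem_eigenspace_iff.mp (hf j), hij.symm]

theorem exists_isUnit_forall_isDiag_conj {n : Type*} [Fintype n] [DecidableEq n]
    {A : ι → Matrix n n K} (hA : ∀ i, IsIdempotentElem (A i))
    (hcomm : ∀ i j, Commute (A i) (A j)) :
    ∃ N : Matrix n n K, IsUnit N ∧ ∀ i, (N⁻¹ * A i * N).IsDiag := by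
  let e := Pi.basisFun K n
  obtain ⟨b, hb⟩ := exists_basis_forall_mem_iInf_eigenspace e
    (iSup_iInf_eigenspace_eq_top_of_isIdempotentElem_of_commute
      (fun i ↦ (hA i).map (Matrix.toLinAlgEquiv e))
      (fun i j ↦ (hcomm i j).map (Matrix.toLinAlgEquiv e)))
  choose χ hχ using hb
  have hinv : (e.toMatrix b)⁻¹ = b.toMatrix e :=
    Matrix.inv_eq_left_inv (b.toMatrix_mul_toMatrix_flip e)
  refine ⟨e.toMatrix b, .of_mul_eq_one _ (e.toMatrix_mul_toMatrix_flip b), fun i ↦ ?_⟩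
  rw [hinv, ← LinearMap.toMatrix_toLin e e (A i),
    basis_toMatrix_mul_linearMap_toMatrix_mul_basis_toMatrix]
  exact isDiag_toMatrix_of_forall_mem_eigenspace b fun k ↦ (Submodule.mem_iInf _).mp (hχ k) i

end SimultaneousDiagonalization

section Conjugation

variable {M : Type*} [Monoid M]

theorem units_conj_mul_units_conj (u : Mˣ) (a b : M) :
    (↑u⁻¹ * a * u) * (↑u⁻¹ * b * u) = ↑u⁻¹ * (a * b) * u := by
  simp [mul_assoc]

theorem commute_units_conj_iff (u : Mˣ) {a b : M} :
    Commute (↑u⁻¹ * a * u) (↑u⁻¹ * b * u) ↔ Commute a b := by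
  simp only [Commute, SemiconjBy, units_conj_mul_units_conj, Units.mul_left_inj,
    Units.mul_right_inj]

theorem isIdempotentElem_units_conj_iff (u : Mˣ) {a : M} :
    IsIdempotentElem (↑u⁻¹ * a * u) ↔ IsIdempotentElem a := by
  simp only [IsIdempotentElem, units_conj_mul_units_conj, Units.mul_left_inj,
    Units.mul_right_inj]

variable {n R : Type*} [Fintype n]

theorem commute_of_isDiag [NonUnitalNonAssocCommSemiring R] {A B : Matrix n n R} (hA : A.IsDiag)
    (hB : B.IsDiag) : Commute A B := by
  classical
  rw [← hA.diagonal_diag, ← hB.diagonal_diag]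
  exact Matrix.commute_diagonal _ _

theorem isIdempotentElem_of_isDiag [NonUnitalNonAssocSemiring R] {A : Matrix n n R}
    (hA : A.IsDiag) (hdiag : ∀ k, IsIdempotentElem (A k k)) : IsIdempotentElem A := by
  classical
  rw [← hA.diagonal_diag, IsIdempotentElem, Matrix.diagonal_mul_diagonal]
  exact congrArg Matrix.diagonal (funext hdiag)

theorem exists_isUnit_forall_isDiag_conj_iff {ι : Type*} [DecidableEq n]
    {A : ι → Matrix n n (ZMod 2)} :
    (∃ N : Matrix n n (ZMod 2), IsUnit N ∧ ∀ i, (N⁻¹ * A i * N).IsDiag) ↔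
      (∀ i, IsIdempotentElem (A i)) ∧ ∀ i j, Commute (A i) (A j) := by
  refine ⟨?_, fun ⟨hA, hcomm⟩ ↦ exists_isUnit_forall_isDiag_conj hA hcomm⟩
  rintro ⟨_, ⟨u, rfl⟩, hdiag⟩
  have hF₂ : ∀ z : ZMod 2, IsIdempotentElem z := by unfold IsIdempotentElem; decide
  simp only [← Matrix.coe_units_inv] at hdiag
  exact ⟨fun i ↦ (isIdempotentElem_units_conj_iff u).mp
      (isIdempotentElem_of_isDiag (hdiag i) fun _ ↦ hF₂ _),
    fun i j ↦ (commute_units_conj_iff u).mp (commute_of_isDiag (hdiag i) (hdiag j))⟩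

end Conjugation

theorem add_eq_zero_iff_eq_of_module_zmod_two {G : Type*} [AddCommGroup G] [Module (ZMod 2) G]
    {x y : G} : x + y = 0 ↔ x = y := by
  rw [← ZModModule.sub_eq_add, sub_eq_zero]

theorem sum_mul_self_of_pairwise_anticommute {ι S : Type*} [NonUnitalNonAssocSemiring S]
    {s : Finset ι} {f : ι → S} (hf : (s : Set ι).Pairwise fun i j ↦ f i * f j + f j * f i = 0) :
    (∑ i ∈ s, f i) * ∑ i ∈ s, f i = ∑ i ∈ s, f i * f i := by
  classical
  induction s using Finset.induction_on with
  | empty => simp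
  | insert a s ha ih =>
    have hcross : f a * ∑ i ∈ s, f i + (∑ i ∈ s, f i) * f a = 0 := by
      rw [Finset.mul_sum, Finset.sum_mul, ← Finset.sum_add_distrib]
      exact Finset.sum_eq_zero fun i hi ↦
        hf (by simp) (by simp [hi]) (ne_of_mem_of_not_mem hi ha).symm
    rw [Finset.sum_insert ha, Finset.sum_insert ha, ← ih (hf.mono (by simp)), add_mul, mul_add,
      mul_add, add_assoc, ← add_assoc (f a * ∑ i ∈ s, f i), hcross, zero_add]

section LinearForms

variable {σ n R : Type*} [CommSemiring R]

/-- The Bockstein operator with coefficients in `R` and variables indexed by `σ`: the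
`R`-derivation of `R[x_i : i ∈ σ]` with `x_i ↦ x_i²`. -/
noncomputable def bocksteinDerivation (σ R : Type*) [CommSemiring R] :
    Derivation R (MvPolynomial σ R) (MvPolynomial σ R) :=
  mkDerivation R fun i ↦ X i ^ 2

variable [Fintype σ]

theorem mkDerivation_apply_eq_sum_mul_pderiv (f : σ → MvPolynomial σ R) (p : MvPolynomial σ R) :
    mkDerivation R f p = ∑ i, f i * pderiv i p := by
  classical
  induction p using MvPolynomial.induction_on with
  | C r => simp
  | add p q hp hq => simp only [map_add, hp, hq, mul_add, Finset.sum_add_distrib]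
  | mul_X p j hp =>
    simp [hp, mkDerivation_X, pderiv_X, Pi.single_apply, mul_add, Finset.sum_add_distrib,
      Finset.mul_sum, mul_comm, mul_left_comm]

theorem bockstein_eq_bocksteinDerivation {m : ℕ} :
    bockstein = bocksteinDerivation (Fin m) (ZMod 2) :=
  funext fun p ↦ (mkDerivation_apply_eq_sum_mul_pderiv (fun i ↦ X i ^ 2) p).symm

/-- The matrix of linear forms `Σ_i x_i A_i` with coefficient matrices `A_i`. -/
noncomputable def linearFormMatrix (A : σ → Matrix n n R) : Matrix n n (MvPolynomial σ R) :=
  ∑ i, (X i : MvPolynomial σ R) • (A i).map C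

theorem linearFormMatrix_apply (A : σ → Matrix n n R) (r c : n) :
    linearFormMatrix A r c = ∑ i, X i * C (A i r c) := by
  simp [linearFormMatrix, Matrix.sum_apply]

theorem map_eval_linearFormMatrix (A : σ → Matrix n n R) (a : σ → R) :
    (linearFormMatrix A).map (eval a) = ∑ i, a i • A i := by
  ext r c
  simp [linearFormMatrix_apply, Matrix.sum_apply]

theorem isDiag_linearFormMatrix_iff {A : σ → Matrix n n R} :
    (linearFormMatrix A).IsDiag ↔ ∀ i, (A i).IsDiag := by
  classical
  refine ⟨fun h i ↦ ?_, fun h r c hrc ↦ ?_⟩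
  · simpa [map_eval_linearFormMatrix, Pi.single_apply] using
      h.map (map_zero (eval (Pi.single i (1 : R))))
  · simp [linearFormMatrix_apply, fun i ↦ h i hrc]

theorem map_bocksteinDerivation_linearFormMatrix (A : σ → Matrix n n R) :
    (linearFormMatrix A).map (bocksteinDerivation σ R) =
      ∑ i, (X i ^ 2 : MvPolynomial σ R) • (A i).map C := by
  ext1 r c
  simp [linearFormMatrix_apply, Matrix.sum_apply, bocksteinDerivation, mkDerivation_X, mul_comm]

variable [Fintype n]

theorem map_C_mul_linearFormMatrix_mul_map_C (P Q : Matrix n n R) (A : σ → Matrix n n R) :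
    P.map C * linearFormMatrix A * Q.map C = linearFormMatrix fun i ↦ P * A i * Q := by
  simp [linearFormMatrix, Finset.mul_sum, Finset.sum_mul, Matrix.map_mul]

theorem isIdempotentElem_sum_of_map_bocksteinDerivation_eq_mul_self {A : σ → Matrix n n R}
    (h : (linearFormMatrix A).map (bocksteinDerivation σ R) =
      linearFormMatrix A * linearFormMatrix A) (s : Finset σ) :
    IsIdempotentElem (∑ i ∈ s, A i) := by
  classical
  -- Evaluate at the indicator vector of `s`, whose entries equal their squares.
  let a : σ → R := fun i ↦ if i ∈ s then 1 else 0
  have hL : (linearFormMatrix A).map (eval a) = ∑ i ∈ s, A i := by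
    simp [map_eval_linearFormMatrix, a, Finset.sum_ite_mem]
  have hβ : ((linearFormMatrix A).map (bocksteinDerivation σ R)).map (eval a) = ∑ i ∈ s, A i := by
    rw [map_bocksteinDerivation_linearFormMatrix]
    ext r c
    simp [Matrix.sum_apply, a]
  rw [h, Matrix.map_mul, hL] at hβ
  exact hβ

theorem map_bocksteinDerivation_linearFormMatrix_eq_mul_self_iff {R : Type*} [CommRing R]
    {A : σ → Matrix n n R} :
    (linearFormMatrix A).map (bocksteinDerivation σ R) =
        linearFormMatrix A * linearFormMatrix A ↔
      (∀ i, IsIdempotentElem (A i)) ∧ Pairwise fun i j ↦ A i * A j + A j * A i = 0 := by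
  classical
  constructor
  · intro h
    have hsum := isIdempotentElem_sum_of_map_bocksteinDerivation_eq_mul_self h
    have hidem (i : σ) : IsIdempotentElem (A i) := by simpa using hsum {i}
    refine ⟨hidem, fun i j hij ↦ ((hidem i).add_iff (hidem j)).mp ?_⟩
    simpa [Finset.sum_pair hij] using hsum {i, j}
  · rintro ⟨hidem, hanti⟩
    rw [map_bocksteinDerivation_linearFormMatrix, linearFormMatrix,
      sum_mul_self_of_pairwise_anticommute]
    · refine Finset.sum_congr rfl fun i _ ↦ ?_
      simp [← Matrix.map_mul, (hidem i).eq, smul_smul, sq]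
    · intro i _ j _ hij
      simp [← Matrix.map_mul, smul_smul, mul_comm (X j), ← smul_add, ← Matrix.map_add, hanti hij]

theorem map_bocksteinDerivation_add_mul_self_eq_zero_iff {A : σ → Matrix n n (ZMod 2)} :
    (linearFormMatrix A).map (bocksteinDerivation σ (ZMod 2)) +
        linearFormMatrix A * linearFormMatrix A = 0 ↔
      (∀ i, IsIdempotentElem (A i)) ∧ ∀ i j, Commute (A i) (A j) := by
  simp only [add_eq_zero_iff_eq_of_module_zmod_two,
    map_bocksteinDerivation_linearFormMatrix_eq_mul_self_iff]
  exact and_congr_right fun _ ↦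
    ⟨fun h i j ↦ (eq_or_ne i j).elim (fun hij ↦ hij ▸ .refl _) (h ·), fun h i j _ ↦ h i j⟩

end LinearForms

theorem diagonalizable_iff_bockstein_plus_square_eq_zero_general {σ n : Type*} [Fintype σ]
    [Fintype n] [DecidableEq n] (A : σ → Matrix n n (ZMod 2)) :
    ((∃ N : Matrix n n (ZMod 2), IsUnit N ∧
        (N⁻¹.map C * linearFormMatrix A * N.map C).IsDiag) ↔
      (linearFormMatrix A).map (bocksteinDerivation σ (ZMod 2)) +
        linearFormMatrix A * linearFormMatrix A = 0) ∧
    ((∃ N : Matrix n n (ZMod 2), IsUnit N ∧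
        (N⁻¹.map C * linearFormMatrix A * N.map C).IsDiag) ↔
      (∀ i, IsIdempotentElem (A i)) ∧ ∀ i j, Commute (A i) (A j)) := by
  simp only [map_C_mul_linearFormMatrix_mul_map_C, isDiag_linearFormMatrix_iff,
    exists_isUnit_forall_isDiag_conj_iff, map_bocksteinDerivation_add_mul_self_eq_zero_iff,
    and_self]

/-- A matrix `L = Σ_i L_i x_i` of homogeneous linear forms over
`F₂[x₁,…,x_m]` is diagonalizable by a scalar matrix `N ∈ GL_n(F₂)` iff
`β(L) + L² = 0`, equivalently iff `L_i² = L_i` for all `i` and the `L_i` commute. -/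
theorem diagonalizable_iff_bockstein_plus_square_eq_zero {m n : ℕ}
    (Ls : Fin m → Matrix (Fin n) (Fin n) (ZMod 2))
    (L : Matrix (Fin n) (Fin n) (MvPolynomial (Fin m) (ZMod 2)))
    (hL : L = ∑ i : Fin m, (X i : MvPolynomial (Fin m) (ZMod 2)) • (Ls i).map C) :
    ((∃ N : Matrix (Fin n) (Fin n) (ZMod 2), IsUnit N ∧
        (((N⁻¹).map C * L * N.map C).IsDiag)) ↔
      L.map bockstein + L * L = 0) ∧
    ((∃ N : Matrix (Fin n) (Fin n) (ZMod 2), IsUnit N ∧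
        (((N⁻¹).map C * L * N.map C).IsDiag)) ↔
      ((∀ i, Ls i * Ls i = Ls i) ∧ ∀ i j, Ls i * Ls j = Ls j * Ls i)) := by
  rw [hL, bockstein_eq_bocksteinDerivation]
  exact diagonalizable_iff_bockstein_plus_square_eq_zero_general Ls
end
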